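/- arXiv:0907.4299 — 3 statements merged into one kernel-verified Lean document; each statement's English description precedes it below -/
import Mathlib

section
/- The sequence (a_k) is given explicitly by: a_{6n} = a_{6n+1} = (−1)^n · 3^{−(3n+1)}, a_{6n+2} = (−1)^n · 2 · 3^{−(3n+2)}, a_{6n+3} = (−1)^n · 3^{−(3n+2)}, a_{6n+4} = (−1)^n · 3^{−(3n+3)}, and a_{6n+5} = 0, for all n ≥ 0. -/
/-- The sequence `a₀ = a₁ = 1/3`, `a_{k+2} = a_{k+1} - (1/3)·a_k`. -/
def reekerA : ℕ → ℚ
  | 0 => 1/3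
  | 1 => 1/3
  | (k+2) => reekerA (k+1) - (1/3) * reekerA k

/-!
When `3 * c = 1`, the characteristic polynomial `X² - X + c` of `u (k + 2) = u (k + 1) - c * u k`
divides `X⁶ + c³ = (X² + c) * (X² - X + c) * (X² + X + c)`, so six steps of the recurrence multiply
every solution by `-c³`.
-/

section Recurrence

variable {R : Type*} [CommRing R] {c : R} {u : ℕ → R}

lemma apply_add_six_of_recurrence (hu : ∀ k, u (k + 2) = u (k + 1) - c * u k) (k : ℕ) :
    u (k + 6) = (1 - c) * (1 - 3 * c) * u (k + 1) - (c ^ 3 + c * (1 - 3 * c)) * u k := by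
  have three_steps (m : ℕ) : u (m + 3) = (1 - c) * u (m + 1) - c * u m := by
    rw [hu (m + 1), hu m]
    ring
  rw [three_steps (k + 3), hu (k + 2), three_steps k, hu k]
  ring

lemma apply_add_six_of_recurrence_of_three_mul_eq_one (hc : 3 * c = 1)
    (hu : ∀ k, u (k + 2) = u (k + 1) - c * u k) (k : ℕ) : u (k + 6) = -c ^ 3 * u k := by
  simp [apply_add_six_of_recurrence hu, hc]

end Recurrence

lemma apply_mul_add_eq_pow_smul {M α : Type*} [Monoid M] [MulAction M α] {f : ℕ → α} {p : ℕ}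
    {q : M} (hf : ∀ k, f (k + p) = q • f k) (n r : ℕ) : f (p * n + r) = q ^ n • f r := by
  induction n with
  | zero => simp
  | succ n ih => rw [mul_add_one, add_right_comm, hf, ih, pow_succ', mul_smul]

lemma neg_inv_pow_pow_mul_zpow_neg {K : Type*} [DivisionRing K] {a : K} (ha : a ≠ 0) (p n : ℕ)
    (j : ℤ) : (-a⁻¹ ^ p) ^ n * a ^ (-j) = (-1) ^ n * a ^ (-(p * n + j)) := by
  rw [neg_pow, ← pow_mul, mul_assoc, neg_add, zpow_add₀ ha, zpow_neg a (p * n), inv_pow]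
  norm_cast

lemma reekerA_add_six (k : ℕ) : reekerA (k + 6) = -3⁻¹ ^ 3 * reekerA k :=
  apply_add_six_of_recurrence_of_three_mul_eq_one (by norm_num)
    (fun k ↦ by rw [reekerA, one_div]) k

lemma reekerA_six_mul_add {r : ℕ} {x : ℚ} {j : ℤ} (hr : reekerA r = x * 3 ^ (-j)) (n : ℕ) :
    reekerA (6 * n + r) = (-1) ^ n * x * 3 ^ (-(3 * (n : ℤ) + j)) :=
  calc reekerA (6 * n + r)
    _ = (-3⁻¹ ^ 3) ^ n * reekerA r :=
      apply_mul_add_eq_pow_smul (q := (-3⁻¹ ^ 3 : ℚ)) reekerA_add_six n r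
    _ = x * ((-3⁻¹ ^ 3) ^ n * 3 ^ (-j)) := by rw [hr, mul_left_comm]
    _ = x * ((-1) ^ n * 3 ^ (-(3 * (n : ℤ) + j))) := by
      rw [neg_inv_pow_pow_mul_zpow_neg three_ne_zero, Nat.cast_ofNat]
    _ = (-1) ^ n * x * 3 ^ (-(3 * (n : ℤ) + j)) := by ring

/-- The explicit formula for the sequence `aₖ`:
`a_{6n} = a_{6n+1} = (−1)ⁿ·3^{−(3n+1)}`, `a_{6n+2} = (−1)ⁿ·2·3^{−(3n+2)}`,
`a_{6n+3} = (−1)ⁿ·3^{−(3n+2)}`, `a_{6n+4} = (−1)ⁿ·3^{−(3n+3)}`, `a_{6n+5} = 0`. -/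
theorem stmt1 (n : ℕ) :
    reekerA (6*n) = (-1)^n * (3:ℚ) ^ (-(3*(n:ℤ)+1)) ∧
    reekerA (6*n+1) = (-1)^n * (3:ℚ) ^ (-(3*(n:ℤ)+1)) ∧
    reekerA (6*n+2) = (-1)^n * 2 * (3:ℚ) ^ (-(3*(n:ℤ)+2)) ∧
    reekerA (6*n+3) = (-1)^n * (3:ℚ) ^ (-(3*(n:ℤ)+2)) ∧
    reekerA (6*n+4) = (-1)^n * (3:ℚ) ^ (-(3*(n:ℤ)+3)) ∧
    reekerA (6*n+5) = 0 := by
  have h₀ : reekerA 0 = 1 * 3 ^ (-1 : ℤ) := by norm_num [reekerA]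
  have h₁ : reekerA 1 = 1 * 3 ^ (-1 : ℤ) := by norm_num [reekerA]
  have h₂ : reekerA 2 = 2 * 3 ^ (-2 : ℤ) := by norm_num [reekerA]
  have h₃ : reekerA 3 = 1 * 3 ^ (-2 : ℤ) := by norm_num [reekerA]
  have h₄ : reekerA 4 = 1 * 3 ^ (-3 : ℤ) := by norm_num [reekerA]
  have h₅ : reekerA 5 = 0 * 3 ^ (-0 : ℤ) := by norm_num [reekerA]
  refine ⟨?_, ?_, reekerA_six_mul_add h₂ n, ?_, ?_, ?_⟩
  · simpa only [mul_one, add_zero] using reekerA_six_mul_add h₀ n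
  · simpa only [mul_one] using reekerA_six_mul_add h₁ n
  · simpa only [mul_one] using reekerA_six_mul_add h₃ n
  · simpa only [mul_one] using reekerA_six_mul_add h₄ n
  · simpa only [mul_zero, zero_mul] using reekerA_six_mul_add h₅ n
end

section
/- In the ring of formal power series ℚ⟦x,y⟧ in two variables, one has the identity (3 − 3x + x²)·(3 − 3y + y²) · Σ_{m,n≥0} c_{m,n} x^m y^n = 3·(1 + (1−x)(1−y) + (1−x)²(1−y)²); that is, the c_{m,n} are exactly the coefficients of the power series expansion of 3·(1 + (1−x)(1−y) + (1−x)²(1−y)²) / ((3 − 3x + x²)(3 − 3y + y²)). -/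
/-- The sequence `a` extended by zero to negative indices. -/
def reekerA' (k : ℤ) : ℚ := if 0 ≤ k then reekerA k.toNat else 0

/-- `c_{m,n} = 9aₘaₙ − 9a_{m−1}aₙ − 9aₘa_{n−1} + 3a_{m−2}aₙ + 15a_{m−1}a_{n−1}
  + 3aₘa_{n−2} − 6a_{m−2}a_{n−1} − 6a_{m−1}a_{n−2} + 3a_{m−2}a_{n−2}`,
terms with negative indices being zero. -/
def reekerC (m n : ℕ) : ℚ :=
  9 * reekerA' m * reekerA' n - 9 * reekerA' (m-1) * reekerA' n
    - 9 * reekerA' m * reekerA' (n-1) + 3 * reekerA' (m-2) * reekerA' n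
    + 15 * reekerA' (m-1) * reekerA' (n-1) + 3 * reekerA' m * reekerA' (n-2)
    - 6 * reekerA' (m-2) * reekerA' (n-1) - 6 * reekerA' (m-1) * reekerA' (n-2)
    + 3 * reekerA' (m-2) * reekerA' (n-2)

/-- The two-variable power series `Σ_{m,n≥0} c_{m,n} xᵐ yⁿ`. -/
def reekerCSeries : MvPowerSeries (Fin 2) ℚ := fun d => reekerC (d 0) (d 1)

section

open PowerSeries

theorem quadratic_mul_mk_of_recurrence {R : Type*} [Semiring R] {p q r : R} {a : ℕ → R}
    (ha : ∀ k, p * a (k + 2) + q * a (k + 1) + r * a k = 0) :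
    (C p + C q * X + C r * X ^ 2) * mk a = C (p * a 0) + C (p * a 1 + q * a 0) * X := by
  ext n
  simp only [add_mul, mul_assoc, map_add, coeff_C_mul, coeff_mk, coeff_C, coeff_X, pow_two]
  match n with
  | 0 => simp
  | 1 => simp [coeff_succ_X_mul 0]
  | k + 2 => simpa [coeff_succ_X_mul] using ha k

/-- The generating function `A(t) = Σ aₖ tᵏ` of the sequence `reekerA`. -/
def reekerSeries : ℚ⟦X⟧ := mk reekerA

theorem quadratic_mul_reekerSeries : (3 - 3 * X + X ^ 2) * reekerSeries = 1 := by
  have recurrence (k : ℕ) :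
      3 * reekerA (k + 2) + (-3) * reekerA (k + 1) + 1 * reekerA k = 0 := by
    rw [reekerA]
    ring
  have key := quadratic_mul_mk_of_recurrence recurrence
  have C_three : (C 3 : ℚ⟦X⟧) = 3 := map_ofNat C 3
  simpa [reekerA, reekerSeries, sub_eq_add_neg, C_three] using key

theorem coeff_X_pow_mul_reekerSeries (j n : ℕ) :
    coeff n (X ^ j * reekerSeries) = reekerA' (n - j) := by
  rw [coeff_X_pow_mul', reekerSeries, coeff_mk, reekerA']
  simp

theorem coeff_reekerSeries (n : ℕ) : coeff n reekerSeries = reekerA' n := by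
  simpa using coeff_X_pow_mul_reekerSeries 0 n

theorem coeff_one_sub_X_mul_reekerSeries (n : ℕ) :
    coeff n ((1 - X) * reekerSeries) = reekerA' n - reekerA' (n - 1) := by
  have shift := coeff_X_pow_mul_reekerSeries 1 n
  rw [pow_one, Nat.cast_one] at shift
  rw [sub_mul, one_mul, map_sub, coeff_reekerSeries, shift]

theorem coeff_one_sub_X_sq_mul_reekerSeries (n : ℕ) :
    coeff n ((1 - X) ^ 2 * reekerSeries)
      = reekerA' n - 2 * reekerA' (n - 1) + reekerA' (n - 2) := by
  have expand : (1 - X) ^ 2 * reekerSeries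
      = (1 - X) * reekerSeries - X ^ 1 * reekerSeries + X ^ 2 * reekerSeries := by ring
  rw [expand, map_add, map_sub, coeff_one_sub_X_mul_reekerSeries, coeff_X_pow_mul_reekerSeries,
    coeff_X_pow_mul_reekerSeries, Nat.cast_one, Nat.cast_ofNat]
  ring

theorem reekerC_eq_sum (m n : ℕ) :
    reekerC m n = 3 * ∑ i ∈ Finset.range 3,
      coeff m ((1 - X) ^ i * reekerSeries) * coeff n ((1 - X) ^ i * reekerSeries) := by
  simp only [Finset.sum_range_succ, Finset.sum_range_zero, pow_zero, pow_one, one_mul,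
    coeff_reekerSeries, coeff_one_sub_X_mul_reekerSeries, coeff_one_sub_X_sq_mul_reekerSeries]
  rw [reekerC]
  ring

theorem reekerCSeries_eq_sum :
    reekerCSeries = 3 * ∑ i ∈ Finset.range 3,
      subst (MvPowerSeries.X 0 : MvPowerSeries (Fin 2) ℚ) ((1 - X) ^ i * reekerSeries)
        * subst (MvPowerSeries.X 1 : MvPowerSeries (Fin 2) ℚ) ((1 - X) ^ i * reekerSeries) := by
  ext d
  rw [← map_ofNat (MvPowerSeries.C (σ := Fin 2) (R := ℚ)) 3, MvPowerSeries.coeff_C_mul, map_sum]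
  simp only [coeff_subst_X_zero_subst_mul_X_one]
  exact reekerC_eq_sum (d 0) (d 1)

theorem subst_one_sub_X_pow_mul {R S σ : Type*} [CommRing R] [CommRing S] [Algebra R S]
    {a : MvPowerSeries σ S} (ha : HasSubst a) (i : ℕ) (f : R⟦X⟧) :
    subst a ((1 - X) ^ i * f) = (1 - a) ^ i * subst a f := by
  simp only [← coe_substAlgHom ha, map_mul, map_pow, map_sub, map_one, substAlgHom_X]

theorem quadratic_mul_subst_reekerSeries {S σ : Type*} [CommRing S] [Algebra ℚ S]
    {a : MvPowerSeries σ S} (ha : HasSubst a) :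
    (3 - 3 * a + a ^ 2) * subst a reekerSeries = 1 := by
  simpa only [← coe_substAlgHom ha, map_mul, map_add, map_sub, map_pow, map_ofNat, map_one,
    substAlgHom_X] using congrArg (substAlgHom ha) quadratic_mul_reekerSeries

end

open MvPowerSeries in
/-- In `ℚ⟦x,y⟧` one has
`(3 − 3x + x²)(3 − 3y + y²) · Σ c_{m,n} xᵐ yⁿ = 3(1 + (1−x)(1−y) + (1−x)²(1−y)²)`. -/
theorem stmt2 :
    (3 - 3 * (X 0 : MvPowerSeries (Fin 2) ℚ) + (X 0) ^ 2)
      * (3 - 3 * (X 1 : MvPowerSeries (Fin 2) ℚ) + (X 1) ^ 2)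
      * reekerCSeries
    = 3 * (1 + (1 - X 0) * (1 - X 1) + (1 - X 0) ^ 2 * (1 - X 1) ^ 2) := by
  let A (s : Fin 2) : MvPowerSeries (Fin 2) ℚ := PowerSeries.subst (X s) reekerSeries
  have hA (s : Fin 2) : (3 - 3 * X s + X s ^ 2) * A s = 1 :=
    quadratic_mul_subst_reekerSeries (PowerSeries.HasSubst.X s)
  have hC : reekerCSeries
      = 3 * (1 + (1 - X 0) * (1 - X 1) + (1 - X 0) ^ 2 * (1 - X 1) ^ 2) * (A 0 * A 1) := by
    rw [reekerCSeries_eq_sum]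
    simp only [subst_one_sub_X_pow_mul (PowerSeries.HasSubst.X _), Finset.sum_range_succ,
      Finset.sum_range_zero, A]
    ring
  calc
    _ = 3 * (1 + (1 - X 0) * (1 - X 1) + (1 - X 0) ^ 2 * (1 - X 1) ^ 2)
          * (((3 - 3 * X 0 + X 0 ^ 2) * A 0) * ((3 - 3 * X 1 + X 1 ^ 2) * A 1)) := by
      rw [hC]
      ring
    _ = _ := by rw [hA, hA, mul_one, mul_one]
end

section
/- For every integer k ≥ 2, the greatest common divisor gcd{ C(k,1), C(k,2), …, C(k,k−1) } of the inner binomial coefficients equals p if k = p^s is a power of a prime p (with s ≥ 1), and equals 1 otherwise. -/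
theorem gcd_choose_prime_pow {p s : ℕ} (hp : p.Prime) (hs : s ≠ 0) :
    (Finset.Icc 1 (p ^ s - 1)).gcd (p ^ s).choose = p :=
  calc (Finset.Icc 1 (p ^ s - 1)).gcd (p ^ s).choose
    _ = (p ^ s).minFac := Choose.gcd_choose_eq_minFac_of_isPrimePow (hp.isPrimePow.pow hs)
    _ = p := hp.pow_minFac hs

/-- For `k ≥ 2`, `gcd{C(k,1), …, C(k,k−1)}` equals `p` if `k = p^s` is a prime power
(`s ≥ 1`), and equals `1` otherwise. -/
theorem stmt7 (k : ℕ) (hk : 2 ≤ k) :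
    (∀ p s : ℕ, p.Prime → 1 ≤ s → k = p ^ s →
      Finset.gcd (Finset.Icc 1 (k - 1)) (Nat.choose k) = p) ∧
    ((¬ ∃ p s : ℕ, p.Prime ∧ 1 ≤ s ∧ k = p ^ s) →
      Finset.gcd (Finset.Icc 1 (k - 1)) (Nat.choose k) = 1) := by
  constructor
  · rintro p s hp hs rfl
    exact gcd_choose_prime_pow hp (Nat.one_le_iff_ne_zero.mp hs)
  · intro h
    have not_isPrimePow : ¬ IsPrimePow k := by
      intro hpow
      obtain ⟨p, s, hp, hs, hps⟩ := (isPrimePow_nat_iff k).mp hpow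
      exact h ⟨p, s, hp, hs, hps.symm⟩
    exact Choose.gcd_choose_eq_one_of_not_isPrimePow hk not_isPrimePow
end
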